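/- arXiv:2509.17114 — 2 statements merged into one kernel-verified Lean document; each statement's English description precedes it below -/
import Mathlib

section
/- Let k > 1 and let ξ₁, ξ₂ : Ω → ℝ^d be measurable with E|ξ₁|^k < ∞ and E|ξ₂|^k < ∞ on the product probability space (Ω, F, ℙ) = (Ω⁰ × Ω¹, F⁰ ⊗ F¹, ℙ⁰ ⊗ ℙ¹). Assume that the maps ω⁰ ↦ L¹(ξᵢ)(ω⁰) (i = 1, 2) are measurable from Ω⁰ into P_k(ℝ^d) (with the Borel σ-algebra of the weak topology) and that ω⁰ ↦ W_k^k(L¹(ξ₁)(ω⁰), L¹(ξ₂)(ω⁰)) is ℙ⁰-measurable. Then 𝕎_k^k(L(L¹(ξ₁)), L(L¹(ξ₂))) ≤ ∫_{Ω⁰} W_k^k(L¹(ξ₁)(ω⁰), L¹(ξ₂)(ω⁰)) ℙ⁰(dω⁰) ≤ E|ξ₁ − ξ₂|^k, where L(L¹(ξᵢ)) is the pushforward of ℙ⁰ under ω⁰ ↦ L¹(ξᵢ)(ω⁰). -/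
open MeasureTheory

noncomputable section

/-- Euclidean space ℝ^d. -/
abbrev Rd (d : ℕ) := EuclideanSpace ℝ (Fin d)

/-- The set of couplings of two measures: probability measures on the product
whose first marginal is `u` and second marginal is `v`. -/
def couplings {E : Type*} [MeasurableSpace E] (u v : Measure E) :
    Set (Measure (E × E)) :=
  {π | IsProbabilityMeasure π ∧ π.map Prod.fst = u ∧ π.map Prod.snd = v}

/-- Infimum of the integral of a cost function over all couplings. -/
def WassPow {E : Type*} [MeasurableSpace E] (cost : E → E → ℝ) (u v : Measure E) : ℝ :=
  sInf ((fun π : Measure (E × E) => ∫ z, cost z.1 z.2 ∂π) '' couplings u v)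

/-- The `p`-Wasserstein distance. -/
def Wp {E : Type*} [MeasurableSpace E] [PseudoMetricSpace E] (p : ℝ) (u v : Measure E) : ℝ :=
  (WassPow (fun x y => dist x y ^ p) u v) ^ (1 / p)

/-- The lifted `p`-Wasserstein distance `𝕎_p` on measures over the space of measures. -/
def WWp {E : Type*} [MeasurableSpace E] [PseudoMetricSpace E] (p : ℝ)
    (μ ν : Measure (Measure E)) : ℝ :=
  (WassPow (fun a b => Wp p a b ^ p) μ ν) ^ (1 / p)

/-- The conditional law `L¹(ξ)(ω⁰)`: the pushforward of `ℙ¹` under `ω¹ ↦ ξ(ω⁰, ω¹)`. -/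
def condLaw {d : ℕ} {Ω₀ Ω₁ : Type*} [MeasurableSpace Ω₀] [MeasurableSpace Ω₁]
    (P₁ : Measure Ω₁) (ξ : Ω₀ × Ω₁ → Rd d) (ω₀ : Ω₀) : Measure (Rd d) :=
  P₁.map (fun ω₁ => ξ (ω₀, ω₁))

/-!
The joint law of two random variables is a coupling of their laws, so its transport cost bounds
the infimum defining the Wasserstein cost from above. Applied to the two conditional laws as random
variables on `Ω₀` this is the first inequality. Applied to the slices `ξᵢ (ω₀, ·)` on `Ω₁` and
integrated in `ω₀` with Fubini's theorem, it is the second.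
-/

section Coupling

variable {Ω E : Type*} [MeasurableSpace Ω] [MeasurableSpace E] {μ : Measure Ω}

theorem map_prodMk_mem_couplings [IsProbabilityMeasure μ] {f g : Ω → E}
    (hf : AEMeasurable f μ) (hg : AEMeasurable g μ) :
    μ.map (fun ω => (f ω, g ω)) ∈ couplings (μ.map f) (μ.map g) := by
  have hfg : AEMeasurable (fun ω => (f ω, g ω)) μ := hf.prodMk hg
  exact ⟨Measure.isProbabilityMeasure_map hfg,
    AEMeasurable.map_map_of_aemeasurable measurable_fst.aemeasurable hfg,
    AEMeasurable.map_map_of_aemeasurable measurable_snd.aemeasurable hfg⟩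

/-- If `c` or `X` is not a.e. measurable, the Bochner integral on the left is `0`, so nonnegativity
of `c` replaces measurability at the price of equality. -/
theorem integral_map_le_integral_comp {X : Ω → E} {c : E → ℝ} (hc : ∀ x, 0 ≤ c x) :
    ∫ x, c x ∂(μ.map X) ≤ ∫ ω, c (X ω) ∂μ := by
  have hcomp : 0 ≤ ∫ ω, c (X ω) ∂μ := integral_nonneg fun ω => hc (X ω)
  by_cases hX : AEMeasurable X μ
  · by_cases hcm : AEStronglyMeasurable c (μ.map X)
    · exact (integral_map hX hcm).le
    · rwa [integral_non_aestronglyMeasurable hcm]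
  · rwa [Measure.map_of_not_aemeasurable hX, integral_zero_measure]

variable {cost : E → E → ℝ}

theorem wassPow_nonneg (hcost : ∀ x y, 0 ≤ cost x y) (u v : Measure E) :
    0 ≤ WassPow cost u v :=
  Real.sInf_nonneg <| Set.forall_mem_image.2 fun _ _ => integral_nonneg fun _ => hcost _ _

theorem wassPow_le_integral (hcost : ∀ x y, 0 ≤ cost x y) {u v : Measure E}
    {π : Measure (E × E)} (hπ : π ∈ couplings u v) :
    WassPow cost u v ≤ ∫ z, cost z.1 z.2 ∂π :=
  csInf_le ⟨0, Set.forall_mem_image.2 fun _ _ => integral_nonneg fun _ => hcost _ _⟩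
    (Set.mem_image_of_mem _ hπ)

theorem wassPow_map_le_integral [IsProbabilityMeasure μ] (hcost : ∀ x y, 0 ≤ cost x y)
    {f g : Ω → E} (hf : AEMeasurable f μ) (hg : AEMeasurable g μ) :
    WassPow cost (μ.map f) (μ.map g) ≤ ∫ ω, cost (f ω) (g ω) ∂μ :=
  (wassPow_le_integral hcost (map_prodMk_mem_couplings hf hg)).trans
    (integral_map_le_integral_comp (c := fun z : E × E => cost z.1 z.2) fun _ => hcost _ _)

end Coupling

section Wasserstein

variable {Ω E : Type*} [PseudoMetricSpace E]

theorem dist_rpow_nonneg (k : ℝ) (x y : E) : 0 ≤ dist x y ^ k :=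
  Real.rpow_nonneg dist_nonneg k

variable [MeasurableSpace Ω] [MeasurableSpace E] {μ : Measure Ω} {k : ℝ}

theorem wp_rpow_nonneg (k : ℝ) (u v : Measure E) : 0 ≤ Wp k u v ^ k :=
  Real.rpow_nonneg (Real.rpow_nonneg (wassPow_nonneg (dist_rpow_nonneg k) u v) _) k

theorem wp_rpow (hk : k ≠ 0) (u v : Measure E) :
    Wp k u v ^ k = WassPow (fun x y => dist x y ^ k) u v := by
  rw [Wp, one_div, Real.rpow_inv_rpow (wassPow_nonneg (dist_rpow_nonneg k) u v) hk]

theorem wwp_rpow (hk : k ≠ 0) (u v : Measure (Measure E)) :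
    WWp k u v ^ k = WassPow (fun a b => Wp k a b ^ k) u v := by
  rw [WWp, one_div, Real.rpow_inv_rpow (wassPow_nonneg (wp_rpow_nonneg k) u v) hk]

theorem wp_map_rpow_le_integral_dist_rpow [IsProbabilityMeasure μ] (hk : k ≠ 0) {f g : Ω → E}
    (hf : AEMeasurable f μ) (hg : AEMeasurable g μ) :
    Wp k (μ.map f) (μ.map g) ^ k ≤ ∫ ω, dist (f ω) (g ω) ^ k ∂μ := by
  rw [wp_rpow hk]
  exact wassPow_map_le_integral (dist_rpow_nonneg k) hf hg

theorem wwp_map_rpow_le_integral_wp_rpow [IsProbabilityMeasure μ] (hk : k ≠ 0)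
    {f g : Ω → Measure E} (hf : AEMeasurable f μ) (hg : AEMeasurable g μ) :
    WWp k (μ.map f) (μ.map g) ^ k ≤ ∫ ω, Wp k (f ω) (g ω) ^ k ∂μ := by
  rw [wwp_rpow hk]
  exact wassPow_map_le_integral (wp_rpow_nonneg k) hf hg

end Wasserstein

section Moments

variable {Ω E : Type*} [MeasurableSpace Ω] [PseudoMetricSpace E] {μ : Measure Ω} {k : ℝ}

theorem integrable_dist_rpow_iff_memLp (hk : 0 < k) {f g : Ω → E}
    (hf : AEStronglyMeasurable f μ) (hg : AEStronglyMeasurable g μ) :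
    Integrable (fun ω => dist (f ω) (g ω) ^ k) μ ↔
      MemLp (fun ω => dist (f ω) (g ω)) (ENNReal.ofReal k) μ := by
  have hk₀ : ENNReal.ofReal k ≠ 0 := (ENNReal.ofReal_pos.2 hk).ne'
  simpa only [Real.norm_of_nonneg dist_nonneg, ENNReal.toReal_ofReal hk.le] using
    integrable_norm_rpow_iff (hf.dist hg) hk₀ ENNReal.ofReal_ne_top

theorem integrable_dist_rpow (hk : 0 < k) {f g : Ω → E} (x₀ : E)
    (hf : AEStronglyMeasurable f μ) (hg : AEStronglyMeasurable g μ)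
    (hfx₀ : Integrable (fun ω => dist (f ω) x₀ ^ k) μ)
    (hgx₀ : Integrable (fun ω => dist (g ω) x₀ ^ k) μ) :
    Integrable (fun ω => dist (f ω) (g ω) ^ k) μ := by
  rw [integrable_dist_rpow_iff_memLp hk hf aestronglyMeasurable_const] at hfx₀
  rw [integrable_dist_rpow_iff_memLp hk hg aestronglyMeasurable_const] at hgx₀
  rw [integrable_dist_rpow_iff_memLp hk hf hg]
  refine (hfx₀.add hgx₀).mono' (hf.dist hg) (ae_of_all μ fun ω => ?_)
  rw [Real.norm_of_nonneg dist_nonneg]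
  exact dist_triangle_right (f ω) (g ω) x₀

end Moments

section ConditionalLaw

variable {Ω₀ Ω₁ E : Type*} [MeasurableSpace Ω₀] [MeasurableSpace Ω₁] [MeasurableSpace E]
  {P₀ : Measure Ω₀} {P₁ : Measure Ω₁}

theorem measurable_map_slice [SFinite P₁] {ξ : Ω₀ × Ω₁ → E} (hξ : Measurable ξ) :
    Measurable fun ω₀ => P₁.map (ξ ⟨ω₀, ·⟩) := by
  have hslice : ∀ ω₀, P₁.map (ξ ⟨ω₀, ·⟩) = (P₁.map (Prod.mk ω₀)).map ξ := fun _ =>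
    (Measure.map_map hξ measurable_prodMk_left).symm
  simp only [hslice]
  exact (Measure.measurable_map ξ hξ).comp Measurable.map_prodMk_left

variable [PseudoMetricSpace E] [IsProbabilityMeasure P₁] {k : ℝ} {ξ₁ ξ₂ : Ω₀ × Ω₁ → E}

theorem wp_map_slice_rpow_le_integral_dist_rpow (hk : k ≠ 0) (hξ₁ : Measurable ξ₁)
    (hξ₂ : Measurable ξ₂) (ω₀ : Ω₀) :
    Wp k (P₁.map (ξ₁ ⟨ω₀, ·⟩)) (P₁.map (ξ₂ ⟨ω₀, ·⟩)) ^ k ≤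
      ∫ ω₁, dist (ξ₁ (ω₀, ω₁)) (ξ₂ (ω₀, ω₁)) ^ k ∂P₁ :=
  wp_map_rpow_le_integral_dist_rpow hk (hξ₁.comp measurable_prodMk_left).aemeasurable
    (hξ₂.comp measurable_prodMk_left).aemeasurable

theorem integrable_wp_map_slice_rpow [SFinite P₀] (hk : k ≠ 0) (hξ₁ : Measurable ξ₁)
    (hξ₂ : Measurable ξ₂)
    (hdist : Integrable (fun ω => dist (ξ₁ ω) (ξ₂ ω) ^ k) (P₀.prod P₁))
    (hW : AEStronglyMeasurable
      (fun ω₀ => Wp k (P₁.map (ξ₁ ⟨ω₀, ·⟩)) (P₁.map (ξ₂ ⟨ω₀, ·⟩)) ^ k) P₀) :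
    Integrable (fun ω₀ => Wp k (P₁.map (ξ₁ ⟨ω₀, ·⟩)) (P₁.map (ξ₂ ⟨ω₀, ·⟩)) ^ k) P₀ := by
  refine hdist.integral_prod_left.mono' hW (ae_of_all P₀ fun ω₀ => ?_)
  rw [Real.norm_of_nonneg (wp_rpow_nonneg k _ _)]
  exact wp_map_slice_rpow_le_integral_dist_rpow hk hξ₁ hξ₂ ω₀

theorem integral_wp_map_slice_rpow_le [SFinite P₀] (hk : k ≠ 0) (hξ₁ : Measurable ξ₁)
    (hξ₂ : Measurable ξ₂)
    (hdist : Integrable (fun ω => dist (ξ₁ ω) (ξ₂ ω) ^ k) (P₀.prod P₁))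
    (hW : AEStronglyMeasurable
      (fun ω₀ => Wp k (P₁.map (ξ₁ ⟨ω₀, ·⟩)) (P₁.map (ξ₂ ⟨ω₀, ·⟩)) ^ k) P₀) :
    ∫ ω₀, Wp k (P₁.map (ξ₁ ⟨ω₀, ·⟩)) (P₁.map (ξ₂ ⟨ω₀, ·⟩)) ^ k ∂P₀ ≤
      ∫ ω, dist (ξ₁ ω) (ξ₂ ω) ^ k ∂(P₀.prod P₁) := by
  rw [integral_prod _ hdist]
  exact integral_mono (integrable_wp_map_slice_rpow hk hξ₁ hξ₂ hdist hW)
    hdist.integral_prod_left (wp_map_slice_rpow_le_integral_dist_rpow hk hξ₁ hξ₂)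

end ConditionalLaw

theorem lifted_wasserstein_le_conditional_le_moment_general {Ω₀ Ω₁ E : Type*}
    [MeasurableSpace Ω₀] [MeasurableSpace Ω₁]
    [PseudoMetricSpace E] [SecondCountableTopology E] [MeasurableSpace E] [OpensMeasurableSpace E]
    (P₀ : Measure Ω₀) (P₁ : Measure Ω₁)
    [IsProbabilityMeasure P₀] [IsProbabilityMeasure P₁]
    {k : ℝ} (hk : 0 < k) {ξ₁ ξ₂ : Ω₀ × Ω₁ → E} (hξ₁ : Measurable ξ₁) (hξ₂ : Measurable ξ₂)
    (x₀ : E) (hmom₁ : Integrable (fun ω => dist (ξ₁ ω) x₀ ^ k) (P₀.prod P₁))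
    (hmom₂ : Integrable (fun ω => dist (ξ₂ ω) x₀ ^ k) (P₀.prod P₁))
    (hW : AEStronglyMeasurable
      (fun ω₀ => Wp k (P₁.map (ξ₁ ⟨ω₀, ·⟩)) (P₁.map (ξ₂ ⟨ω₀, ·⟩)) ^ k) P₀) :
    WWp k (P₀.map fun ω₀ => P₁.map (ξ₁ ⟨ω₀, ·⟩)) (P₀.map fun ω₀ => P₁.map (ξ₂ ⟨ω₀, ·⟩)) ^ k ≤
        ∫ ω₀, Wp k (P₁.map (ξ₁ ⟨ω₀, ·⟩)) (P₁.map (ξ₂ ⟨ω₀, ·⟩)) ^ k ∂P₀ ∧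
      ∫ ω₀, Wp k (P₁.map (ξ₁ ⟨ω₀, ·⟩)) (P₁.map (ξ₂ ⟨ω₀, ·⟩)) ^ k ∂P₀ ≤
        ∫ ω, dist (ξ₁ ω) (ξ₂ ω) ^ k ∂(P₀.prod P₁) := by
  have hdist : Integrable (fun ω => dist (ξ₁ ω) (ξ₂ ω) ^ k) (P₀.prod P₁) :=
    integrable_dist_rpow hk x₀ hξ₁.aestronglyMeasurable hξ₂.aestronglyMeasurable hmom₁ hmom₂
  exact ⟨wwp_map_rpow_le_integral_wp_rpow hk.ne' (measurable_map_slice hξ₁).aemeasurable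
      (measurable_map_slice hξ₂).aemeasurable,
    integral_wp_map_slice_rpow_le hk.ne' hξ₁ hξ₂ hdist hW⟩

/-- for `k > 1` and `ξ₁, ξ₂` with finite `k`-th moments on the product space,
`𝕎_k^k(L(L¹(ξ₁)), L(L¹(ξ₂))) ≤ ∫ W_k^k(L¹(ξ₁)(ω⁰), L¹(ξ₂)(ω⁰)) ℙ⁰(dω⁰) ≤ E|ξ₁ − ξ₂|^k`. -/
theorem lifted_wasserstein_le_conditional_le_moment {d : ℕ} {Ω₀ Ω₁ : Type*}
    [MeasurableSpace Ω₀] [MeasurableSpace Ω₁]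
    (P₀ : Measure Ω₀) (P₁ : Measure Ω₁)
    [IsProbabilityMeasure P₀] [IsProbabilityMeasure P₁]
    (k : ℝ) (hk : 1 < k)
    (ξ₁ ξ₂ : Ω₀ × Ω₁ → Rd d) (hξ₁ : Measurable ξ₁) (hξ₂ : Measurable ξ₂)
    (hmom₁ : Integrable (fun ω => ‖ξ₁ ω‖ ^ k) (P₀.prod P₁))
    (hmom₂ : Integrable (fun ω => ‖ξ₂ ω‖ ^ k) (P₀.prod P₁))
    (hmeas₁ : Measurable (condLaw P₁ ξ₁))
    (hmeas₂ : Measurable (condLaw P₁ ξ₂))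
    (hWmeas : Measurable (fun ω₀ => Wp k (condLaw P₁ ξ₁ ω₀) (condLaw P₁ ξ₂ ω₀) ^ k)) :
    WWp k (P₀.map (condLaw P₁ ξ₁)) (P₀.map (condLaw P₁ ξ₂)) ^ k ≤
        ∫ ω₀, Wp k (condLaw P₁ ξ₁ ω₀) (condLaw P₁ ξ₂ ω₀) ^ k ∂P₀ ∧
      ∫ ω₀, Wp k (condLaw P₁ ξ₁ ω₀) (condLaw P₁ ξ₂ ω₀) ^ k ∂P₀ ≤
        ∫ ω, ‖ξ₁ ω - ξ₂ ω‖ ^ k ∂(P₀.prod P₁) := by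
  simp only [← dist_eq_norm]
  exact lifted_wasserstein_le_conditional_le_moment_general P₀ P₁ (zero_lt_one.trans hk) hξ₁ hξ₂ 0
    (by simpa only [dist_zero_right] using hmom₁) (by simpa only [dist_zero_right] using hmom₂)
    hWmeas.aestronglyMeasurable
end
end

section
/- Let β₂, β₃ ∈ ℝ with β₂β₃ ≥ 0 and set f(x, u) = −x³ + (1 − β₂)x + β₂β₃ ∫ z u(dz) for x ∈ ℝ and u ∈ P₂(ℝ). Then for all x, y ∈ ℝ and u, v ∈ P₂(ℝ), (x − y)(f(x, u) − f(y, v)) ≤ (1 − β₂ + β₂β₃/2)|x − y|² + (β₂β₃/2) W₂²(u, v). -/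
open MeasureTheory

noncomputable section

/-- Membership in `P₂(ℝ)`: a probability measure on `ℝ` with finite second moment. -/
def MemP2 (u : Measure ℝ) : Prop :=
  IsProbabilityMeasure u ∧ Integrable (fun z => |z| ^ 2) u

/-- The drift of Example 6.1: `f(x, u) = −x³ + (1 − β₂)x + β₂β₃ ∫ z u(dz)`. -/
def driftEx1 (β₂ β₃ : ℝ) (x : ℝ) (u : Measure ℝ) : ℝ :=
  -x ^ 3 + (1 - β₂) * x + β₂ * β₃ * ∫ z, z ∂u

/-!
Under any coupling of `u` and `v`, the difference of their means is the mean of the difference of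
the coordinates, so Jensen's inequality bounds it by the transport cost, hence by `Wp p u v`.
In the drift the cubic term is dissipative because `z ↦ z ^ 3` is monotone, and Young's inequality
splits the product of `x - y` with the mean difference.
-/

section Jensen

variable {α E : Type*} [MeasurableSpace α] [NormedAddCommGroup E] [NormedSpace ℝ E]

lemma norm_integral_rpow_le_integral_norm_rpow {μ : Measure α} [IsProbabilityMeasure μ]
    {f : α → E} {p : ℝ} (hp : 1 ≤ p) (hf : MemLp f (ENNReal.ofReal p) μ) :
    ‖∫ a, f a ∂μ‖ ^ p ≤ ∫ a, ‖f a‖ ^ p ∂μ := by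
  have hp₀ : 0 < p := zero_lt_one.trans_le hp
  have hf_int : Integrable f μ := hf.integrable (ENNReal.one_le_ofReal.2 hp)
  have hfp_int : Integrable (fun a => ‖f a‖ ^ p) μ := by
    simpa only [ENNReal.toReal_ofReal hp₀.le] using
      hf.integrable_norm_rpow (ENNReal.ofReal_pos.2 hp₀).ne' ENNReal.ofReal_ne_top
  calc ‖∫ a, f a ∂μ‖ ^ p
      ≤ (∫ a, ‖f a‖ ∂μ) ^ p := by gcongr; exact norm_integral_le_integral_norm f
    _ ≤ ∫ a, ‖f a‖ ^ p ∂μ :=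
        (convexOn_rpow hp).map_integral_le (Real.continuous_rpow_const hp₀.le).continuousOn
          isClosed_Ici (ae_of_all μ fun a => norm_nonneg (f a)) hf_int.norm hfp_int

end Jensen

section Coupling

variable {E : Type*} [MeasurableSpace E] {u v : Measure E}

lemma prod_mem_couplings [IsProbabilityMeasure u] [IsProbabilityMeasure v] :
    u.prod v ∈ couplings u v :=
  ⟨inferInstance, by simp, by simp⟩

lemma le_wassPow [IsProbabilityMeasure u] [IsProbabilityMeasure v] {cost : E → E → ℝ} {c : ℝ}
    (h : ∀ π ∈ couplings u v, c ≤ ∫ z, cost z.1 z.2 ∂π) : c ≤ WassPow cost u v :=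
  le_csInf (Set.Nonempty.image _ ⟨_, prod_mem_couplings⟩) (Set.forall_mem_image.2 h)

variable {π : Measure (E × E)}

lemma measurePreserving_fst_of_mem_couplings (hπ : π ∈ couplings u v) :
    MeasurePreserving Prod.fst π u :=
  ⟨measurable_fst, hπ.2.1⟩

lemma measurePreserving_snd_of_mem_couplings (hπ : π ∈ couplings u v) :
    MeasurePreserving Prod.snd π v :=
  ⟨measurable_snd, hπ.2.2⟩

end Coupling

section MeanDifference

variable {E : Type*} [NormedAddCommGroup E] [NormedSpace ℝ E] [MeasurableSpace E]
  {u v : Measure E}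

lemma integral_id_sub_integral_id_of_mem_couplings {π : Measure (E × E)}
    (hπ : π ∈ couplings u v) (hu : Integrable id u) (hv : Integrable id v) :
    (∫ x, x ∂u) - ∫ y, y ∂v = ∫ z, (z.1 - z.2) ∂π := by
  have h_fst := measurePreserving_fst_of_mem_couplings hπ
  have h_snd := measurePreserving_snd_of_mem_couplings hπ
  have hu_eq : ∫ x, x ∂u = ∫ z, z.1 ∂π := by
    rw [← h_fst.map_eq] at hu ⊢
    exact integral_map h_fst.aemeasurable hu.aestronglyMeasurable
  have hv_eq : ∫ y, y ∂v = ∫ z, z.2 ∂π := by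
    rw [← h_snd.map_eq] at hv ⊢
    exact integral_map h_snd.aemeasurable hv.aestronglyMeasurable
  rw [hu_eq, hv_eq]
  exact (integral_sub (h_fst.integrable_comp_of_integrable hu)
    (h_snd.integrable_comp_of_integrable hv)).symm

lemma norm_integral_id_sub_rpow_le_integral_dist_rpow {π : Measure (E × E)}
    (hπ : π ∈ couplings u v) {p : ℝ} (hp : 1 ≤ p)
    (hu : MemLp id (ENNReal.ofReal p) u) (hv : MemLp id (ENNReal.ofReal p) v) :
    ‖(∫ x, x ∂u) - ∫ y, y ∂v‖ ^ p ≤ ∫ z, dist z.1 z.2 ^ p ∂π := by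
  have h_fst := measurePreserving_fst_of_mem_couplings hπ
  have h_snd := measurePreserving_snd_of_mem_couplings hπ
  have := hπ.1
  have : IsProbabilityMeasure u := hπ.2.1 ▸ Measure.isProbabilityMeasure_map (by fun_prop)
  have : IsProbabilityMeasure v := hπ.2.2 ▸ Measure.isProbabilityMeasure_map (by fun_prop)
  have hp' : 1 ≤ ENNReal.ofReal p := ENNReal.one_le_ofReal.2 hp
  have h_sub : MemLp (fun z : E × E => z.1 - z.2) (ENNReal.ofReal p) π :=
    (hu.comp_measurePreserving h_fst).sub (hv.comp_measurePreserving h_snd)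
  rw [integral_id_sub_integral_id_of_mem_couplings hπ (hu.integrable hp') (hv.integrable hp')]
  simp only [dist_eq_norm]
  exact norm_integral_rpow_le_integral_norm_rpow hp h_sub

lemma norm_integral_id_sub_le_wp [IsProbabilityMeasure u] [IsProbabilityMeasure v]
    {p : ℝ} (hp : 1 ≤ p)
    (hu : MemLp id (ENNReal.ofReal p) u) (hv : MemLp id (ENNReal.ofReal p) v) :
    ‖(∫ x, x ∂u) - ∫ y, y ∂v‖ ≤ Wp p u v := by
  have hp₀ : 0 < p := zero_lt_one.trans_le hp
  have h_rpow : ‖(∫ x, x ∂u) - ∫ y, y ∂v‖ ^ p ≤ WassPow (fun x y => dist x y ^ p) u v :=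
    le_wassPow fun _ hπ => norm_integral_id_sub_rpow_le_integral_dist_rpow hπ hp hu hv
  calc ‖(∫ x, x ∂u) - ∫ y, y ∂v‖
      = (‖(∫ x, x ∂u) - ∫ y, y ∂v‖ ^ p) ^ (1 / p) := by
        rw [one_div, Real.rpow_rpow_inv (norm_nonneg _) hp₀.ne']
    _ ≤ Wp p u v := by unfold Wp; gcongr

end MeanDifference

lemma sub_mul_pow_sub_pow_nonneg {R : Type*} [Ring R] [LinearOrder R] [IsStrictOrderedRing R]
    {n : ℕ} (hn : Odd n) (x y : R) : 0 ≤ (x - y) * (x ^ n - y ^ n) :=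
  monovary_iff_forall_mul_nonneg.1 (monotone_id.monovary hn.strictMono_pow.monotone) y x

lemma MemP2.memLp_id {u : Measure ℝ} (hu : MemP2 u) : MemLp id 2 u :=
  (memLp_two_iff_integrable_sq aestronglyMeasurable_id).2 <| by
    simpa only [id_eq, sq_abs] using hu.2

lemma MemP2.sq_integral_id_sub_le_sq_wp {u v : Measure ℝ} (hu : MemP2 u) (hv : MemP2 v) :
    ((∫ x, x ∂u) - ∫ y, y ∂v) ^ 2 ≤ Wp 2 u v ^ 2 := by
  have := hu.1
  have := hv.1
  have h_norm : ‖(∫ x, x ∂u) - ∫ y, y ∂v‖ ≤ Wp 2 u v :=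
    norm_integral_id_sub_le_wp one_le_two (by simpa using hu.memLp_id) (by simpa using hv.memLp_id)
  exact sq_le_sq.2 (h_norm.trans (le_abs_self _))

/-- monotonicity estimate for the drift of Example 6.1:
`(x − y)(f(x,u) − f(y,v)) ≤ (1 − β₂ + β₂β₃/2)|x−y|² + (β₂β₃/2) W₂²(u, v)`. -/
theorem drift_monotonicity_ex1 (β₂ β₃ : ℝ) (h : 0 ≤ β₂ * β₃) :
    ∀ (x y : ℝ) (u v : Measure ℝ), MemP2 u → MemP2 v →
      (x - y) * (driftEx1 β₂ β₃ x u - driftEx1 β₂ β₃ y v) ≤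
        (1 - β₂ + β₂ * β₃ / 2) * |x - y| ^ 2 + (β₂ * β₃ / 2) * Wp 2 u v ^ 2 := by
  intro x y u v hu hv
  set a := ∫ z, z ∂u with ha
  set b := ∫ z, z ∂v with hb
  have h_cube : 0 ≤ (x - y) * (x ^ 3 - y ^ 3) := sub_mul_pow_sub_pow_nonneg (by decide) x y
  have h_young : (x - y) * (a - b) ≤ (|x - y| ^ 2 + Wp 2 u v ^ 2) / 2 := by
    have h_mean : (a - b) ^ 2 ≤ Wp 2 u v ^ 2 := hu.sq_integral_id_sub_le_sq_wp hv
    rw [sq_abs]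
    linarith [two_mul_le_add_sq (x - y) (a - b)]
  calc (x - y) * (driftEx1 β₂ β₃ x u - driftEx1 β₂ β₃ y v)
      = -((x - y) * (x ^ 3 - y ^ 3)) + (1 - β₂) * |x - y| ^ 2
          + β₂ * β₃ * ((x - y) * (a - b)) := by
        simp only [driftEx1, ← ha, ← hb, sq_abs]; ring
    _ ≤ 0 + (1 - β₂) * |x - y| ^ 2
          + β₂ * β₃ * ((|x - y| ^ 2 + Wp 2 u v ^ 2) / 2) := by
        gcongr; exact neg_nonpos.2 h_cube
    _ = (1 - β₂ + β₂ * β₃ / 2) * |x - y| ^ 2 + (β₂ * β₃ / 2) * Wp 2 u v ^ 2 := by ring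
end
end
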